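/- Alon–Stav theorem: for every hereditary graph property P (containing at least one graph on n vertices for every n) there exist a number p ∈ [0,1] and a function ε : ℕ → ℝ with ε(n) → 0 as n → ∞ such that for every n and every finite simple graph G on n vertices, d_1(G, P) ≤ E[ d_1(G(n,p), P) ] + ε(n), where G(n,p) is the Erdős–Rényi random graph on n vertices in which each pair is an edge independently with probability p, and the expectation is over G(n,p). -/

import Mathlib

open Finset
open scoped Classical

-- The subgraph of `G` induced by the vertex subset `S`, presented as a graph on `Fin S.card`
-- (via the order isomorphism between `Fin S.card` and `S`).
noncomputable def inducedCopy {n : ℕ} (G : SimpleGraph (Fin n)) (S : Finset (Fin n)) :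
    SimpleGraph (Fin S.card) :=
  SimpleGraph.comap (fun i => (S.orderIsoOfFin rfl i).1) G

-- A graph property: an isomorphism-closed class of finite simple graphs.
def IsGraphProperty (P : ∀ n : ℕ, Set (SimpleGraph (Fin n))) : Prop :=
  ∀ (n : ℕ) (G G' : SimpleGraph (Fin n)), Nonempty (G ≃g G') → (G ∈ P n → G' ∈ P n)

-- A hereditary graph property: closed under taking induced subgraphs.
def IsHereditary (P : ∀ n : ℕ, Set (SimpleGraph (Fin n))) : Prop :=
  IsGraphProperty P ∧
    ∀ (n : ℕ) (G : SimpleGraph (Fin n)), G ∈ P n →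
      ∀ S : Finset (Fin n), inducedCopy G S ∈ P S.card

-- The normalized edit distance `d_1(G,G') = |E(G) △ E(G')| / C(n,2)`, computed via
-- ordered pairs: `|{(u,v) : G.Adj u v ≠ G'.Adj u v}| / (n(n−1))`.
noncomputable def d1dist {n : ℕ} (G G' : SimpleGraph (Fin n)) : ℝ :=
  ((Finset.univ.filter
      (fun p : Fin n × Fin n => ¬ (G.Adj p.1 p.2 ↔ G'.Adj p.1 p.2))).card : ℝ) /
    ((n : ℝ) * ((n : ℝ) - 1))

-- The normalized edit distance from `G` to the property `P`.
noncomputable def d1toProperty {n : ℕ} (P : ∀ n : ℕ, Set (SimpleGraph (Fin n)))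
    (G : SimpleGraph (Fin n)) : ℝ :=
  sInf { r : ℝ | ∃ G' : SimpleGraph (Fin n), G' ∈ P n ∧ r = d1dist G G' }


namespace AS

noncomputable def wt (p : ℝ) (n : ℕ) (H : SimpleGraph (Fin n)) : ℝ :=
  p ^ H.edgeFinset.card * (1 - p) ^ (Nat.choose n 2 - H.edgeFinset.card)

noncomputable def EE (n : ℕ) : Finset (Sym2 (Fin n)) := (⊤ : SimpleGraph (Fin n)).edgeFinset

theorem mem_EE {n : ℕ} (a b : Fin n) : s(a, b) ∈ EE n ↔ a ≠ b := by
  simp [EE]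

theorem card_EE (n : ℕ) : (EE n).card = n.choose 2 := by
  have := SimpleGraph.card_edgeFinset_top_eq_card_choose_two (V := Fin n)
  simp only [Fintype.card_fin] at this
  rw [← this, EE]

theorem edge_subset {n : ℕ} (H : SimpleGraph (Fin n)) : H.edgeFinset ⊆ EE n := by
  intro e
  induction e with
  | h a b =>
    rw [mem_EE, SimpleGraph.mem_edgeFinset, SimpleGraph.mem_edgeSet]
    exact fun h => h.ne

theorem sum_graph {n : ℕ} (g : Finset (Sym2 (Fin n)) → ℝ) :
    ∑ H : SimpleGraph (Fin n), g H.edgeFinset = ∑ T ∈ (EE n).powerset, g T := by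
  refine Finset.sum_bij' (fun H _ => H.edgeFinset)
    (fun T _ => SimpleGraph.fromEdgeSet (T : Set (Sym2 (Fin n)))) ?_ ?_ ?_ ?_ ?_
  · intro H _
    exact Finset.mem_powerset.2 (edge_subset H)
  · intro T _; exact Finset.mem_univ _
  · intro H _
    ext a b
    simp
  · intro T hT
    rw [Finset.mem_powerset] at hT
    ext e
    induction e with
    | h a b =>
      simp only [SimpleGraph.mem_edgeFinset, SimpleGraph.mem_edgeSet, SimpleGraph.fromEdgeSet_adj,
        Finset.mem_coe]
      exact ⟨fun h => h.1, fun h => ⟨h, (mem_EE a b).1 (hT h)⟩⟩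
  · intro H _; rfl

theorem cyl (p : ℝ) {N : ℕ} (F A : Finset (Sym2 (Fin N))) (hF : F ⊆ EE N) (hA : A ⊆ F) :
    ∑ H : SimpleGraph (Fin N), wt p N H * (if H.edgeFinset ∩ F = A then 1 else 0)
      = p ^ A.card * (1 - p) ^ (F.card - A.card) := by
  have h1 := sum_graph (n := N) (fun T => p ^ T.card * (1 - p) ^ (Nat.choose N 2 - T.card) *
    (if T ∩ F = A then 1 else 0))
  unfold wt
  rw [h1]
  simp only [mul_ite, mul_one, mul_zero]
  rw [← Finset.sum_filter]
  have h2 : ∑ T ∈ (EE N).powerset with T ∩ F = A, p ^ T.card * (1 - p) ^ (Nat.choose N 2 - T.card)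
      = ∑ T ∈ (EE N \ F).powerset, (p ^ A.card * (1 - p) ^ (F.card - A.card)) *
        (p ^ T.card * (1 - p) ^ ((EE N \ F).card - T.card)) := by
    refine Finset.sum_bij' (fun T _ => T \ F) (fun T _ => T ∪ A) ?_ ?_ ?_ ?_ ?_
    · intro T hT
      simp only [Finset.mem_filter, Finset.mem_powerset] at hT ⊢
      exact Finset.sdiff_subset_sdiff hT.1 le_rfl
    · intro T hT
      simp only [Finset.mem_filter, Finset.mem_powerset] at hT ⊢
      refine ⟨Finset.union_subset (hT.trans Finset.sdiff_subset) (hA.trans hF), ?_⟩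
      ext e
      have h1 := @hT e
      have h2 := @hA e
      simp only [Finset.mem_sdiff, Finset.mem_inter, Finset.mem_union] at *
      tauto
    · intro T hT
      simp only [Finset.mem_filter, Finset.mem_powerset] at hT ⊢
      rw [← hT.2]
      ext e
      simp only [Finset.mem_sdiff, Finset.mem_inter, Finset.mem_union] at *
      tauto
    · intro T hT
      simp only [Finset.mem_powerset] at hT ⊢
      ext e
      have h1 := @hT e
      have h2 := @hA e
      simp only [Finset.mem_sdiff, Finset.mem_union] at *
      tauto
    · intro T hT
      simp only [Finset.mem_filter, Finset.mem_powerset] at hT ⊢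
      have c1 : (T \ F).card + A.card = T.card := by
        rw [← hT.2, add_comm]; exact Finset.card_inter_add_card_sdiff T F
      have c2 : (EE N \ F).card + F.card = N.choose 2 := by
        rw [← card_EE]; exact Finset.card_sdiff_add_card_eq_card hF
      have c3 : (T \ F).card ≤ (EE N \ F).card :=
        Finset.card_le_card (Finset.sdiff_subset_sdiff hT.1 le_rfl)
      have c4 := Finset.card_le_card hA
      have c5 : N.choose 2 - T.card = (F.card - A.card) + ((EE N \ F).card - (T \ F).card) := by
        omega
      rw [c5, ← c1, pow_add, pow_add]
      ring
  rw [h2, ← Finset.mul_sum, Finset.sum_pow_mul_eq_add_pow]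
  simp

theorem wt_nonneg {p : ℝ} (hp : p ∈ Set.Icc (0:ℝ) 1) {n : ℕ} (H : SimpleGraph (Fin n)) :
    0 ≤ wt p n H :=
  mul_nonneg (pow_nonneg hp.1 _) (pow_nonneg (by linarith [hp.2]) _)

theorem wt_sum (p : ℝ) (n : ℕ) : ∑ H : SimpleGraph (Fin n), wt p n H = 1 := by
  have := cyl p (N := n) ∅ ∅ (by simp) (by simp)
  simpa using this

noncomputable def FF {n N : ℕ} (φ : Fin n ↪ Fin N) : Finset (Sym2 (Fin N)) :=
  (EE n).map φ.sym2Map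
noncomputable def AA {n N : ℕ} (φ : Fin n ↪ Fin N) (G : SimpleGraph (Fin n)) :
  Finset (Sym2 (Fin N)) := G.edgeFinset.map φ.sym2Map

theorem FF_sub {n N : ℕ} (φ : Fin n ↪ Fin N) : FF φ ⊆ EE N := by
  intro e he
  obtain ⟨x, hx, rfl⟩ := Finset.mem_map.1 he
  induction x with
  | h a b =>
    rw [mem_EE] at hx
    simpa [mem_EE] using hx

theorem AA_sub {n N : ℕ} (φ : Fin n ↪ Fin N) (G : SimpleGraph (Fin n)) : AA φ G ⊆ FF φ :=
  Finset.map_subset_map.2 (edge_subset G)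

theorem mem_FF {n N : ℕ} (φ : Fin n ↪ Fin N) (e : Sym2 (Fin N)) :
    e ∈ FF φ ↔ ∃ a b, a ≠ b ∧ e = s(φ a, φ b) := by
  constructor
  · intro he
    obtain ⟨x, hx, rfl⟩ := Finset.mem_map.1 he
    induction x with
    | h a b => exact ⟨a, b, (mem_EE a b).1 hx, rfl⟩
  · rintro ⟨a, b, h, rfl⟩
    exact Finset.mem_map.2 ⟨s(a,b), (mem_EE a b).2 h, rfl⟩

theorem mem_AA {n N : ℕ} (φ : Fin n ↪ Fin N) (G : SimpleGraph (Fin n)) (a b : Fin n) :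
    s(φ a, φ b) ∈ AA φ G ↔ G.Adj a b := by
  have : s(φ a, φ b) = φ.sym2Map s(a, b) := rfl
  rw [this, AA, Finset.mem_map']
  simp

theorem comap_iff {n N : ℕ} (φ : Fin n ↪ Fin N) (G : SimpleGraph (Fin n))
    (H : SimpleGraph (Fin N)) : H.comap φ = G ↔ H.edgeFinset ∩ FF φ = AA φ G := by
  constructor
  · rintro rfl
    ext e
    constructor
    · intro he
      rw [Finset.mem_inter, mem_FF] at he
      obtain ⟨h, a, b, hab, rfl⟩ := he
      rw [mem_AA]
      simpa using h
    · intro he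
      have h2 := AA_sub _ _ he
      refine Finset.mem_inter.2 ⟨?_, h2⟩
      obtain ⟨a, b, hab, rfl⟩ := (mem_FF _ _).1 h2
      rw [mem_AA] at he
      simpa using he
  · intro h
    ext a b
    rw [← mem_AA φ G a b, ← h]
    simp only [SimpleGraph.comap_adj, Finset.mem_inter, SimpleGraph.mem_edgeFinset,
      SimpleGraph.mem_edgeSet, mem_FF]
    refine ⟨fun h => ⟨h, a, b, ?_, rfl⟩, fun h => h.1⟩
    rintro rfl
    exact h.ne rfl

theorem prob_emb (p : ℝ) {n N : ℕ} (φ : Fin n ↪ Fin N) (G : SimpleGraph (Fin n)) :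
    ∑ H : SimpleGraph (Fin N), wt p N H * (if H.comap φ = G then 1 else 0) = wt p n G := by
  simp only [comap_iff]
  rw [cyl p _ _ (FF_sub φ) (AA_sub φ G)]
  simp [FF, AA, wt, card_EE]

theorem her {P : ∀ n : ℕ, Set (SimpleGraph (Fin n))} (hP : IsHereditary P) {n N : ℕ}
    (φ : Fin n ↪ Fin N) (H : SimpleGraph (Fin N)) (hH : H ∈ P N) : H.comap φ ∈ P n := by
  have key : ∀ m (K : SimpleGraph (Fin m)), m = n → K ∈ P m → Nonempty (K ≃g H.comap φ) →
      H.comap φ ∈ P n := by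
    rintro m K rfl hK hi
    exact hP.1 _ _ _ hi hK
  let S : Finset (Fin N) := Finset.univ.map φ
  refine key S.card (inducedCopy H S) (by simp [S]) (hP.2 N H hH S) ⟨?_⟩
  have hS : ∀ x, x ∈ S ↔ ∃ a, φ a = x := by intro x; simp [S]
  let e1 : Fin n ≃ S := Equiv.ofBijective (fun a => ⟨φ a, (hS _).2 ⟨a, rfl⟩⟩)
    ⟨fun a b h => φ.injective (by simpa using h), fun ⟨x, hx⟩ => by
      obtain ⟨a, ha⟩ := (hS x).1 hx
      exact ⟨a, Subtype.ext ha⟩⟩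
  refine ⟨(S.orderIsoOfFin rfl).toEquiv.trans e1.symm, ?_⟩
  intro a b
  have h : ∀ y : S, φ (e1.symm y) = y.1 := fun y => congrArg Subtype.val (e1.apply_symm_apply y)
  simp only [SimpleGraph.comap_adj, Equiv.trans_apply, h, inducedCopy]
  rfl

noncomputable def df {n : ℕ} (R R' : SimpleGraph (Fin n)) (x y : Fin n) : ℝ :=
  if ¬ (R.Adj x y ↔ R'.Adj x y) then 1 else 0

theorem df_nonneg {n : ℕ} (R R' : SimpleGraph (Fin n)) (x y : Fin n) : 0 ≤ df R R' x y := by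
  unfold df; split_ifs <;> norm_num

theorem df_le {n : ℕ} (R R' : SimpleGraph (Fin n)) (x y : Fin n) : df R R' x y ≤ 1 := by
  unfold df; split_ifs <;> norm_num

theorem df_self {n : ℕ} (R R' : SimpleGraph (Fin n)) (x : Fin n) : df R R' x x = 0 := by
  simp [df]

theorem d1_eq {n : ℕ} (R R' : SimpleGraph (Fin n)) :
    d1dist R R' = (∑ x, ∑ y, df R R' x y) / ((n : ℝ) * ((n : ℝ) - 1)) := by
  unfold d1dist df
  rw [← Finset.sum_product', Finset.sum_boole]
  simp

theorem nn_nonneg (n : ℕ) : (0:ℝ) ≤ (n : ℝ) * ((n : ℝ) - 1) := by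
  rcases n with _ | n
  · simp
  · push_cast; simp; positivity

theorem d1_nonneg {n : ℕ} (R R' : SimpleGraph (Fin n)) : 0 ≤ d1dist R R' := by
  unfold d1dist
  exact div_nonneg (Nat.cast_nonneg _) (nn_nonneg n)

theorem sum_offdiag {n : ℕ} (c : ℝ) : ∑ x : Fin n, ∑ y : Fin n, (if x = y then 0 else c)
    = (n : ℝ) * ((n : ℝ) - 1) * c := by
  have : ∀ x y : Fin n, (if x = y then 0 else c) = c - (if x = y then c else 0) := by
    intro x y; split_ifs <;> simp
  simp only [this, Finset.sum_sub_distrib]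
  simp
  ring

theorem d1_le_one {n : ℕ} (R R' : SimpleGraph (Fin n)) : d1dist R R' ≤ 1 := by
  rw [d1_eq]
  refine div_le_one_of_le₀ ?_ (nn_nonneg n)
  have := sum_offdiag (n := n) 1
  rw [mul_one] at this
  rw [← this]
  refine Finset.sum_le_sum fun x _ => Finset.sum_le_sum fun y _ => ?_
  split_ifs with h
  · rw [h, df_self]
  · exact df_le _ _ _ _

section
variable {P : ∀ n : ℕ, Set (SimpleGraph (Fin n))}

theorem d_le {n : ℕ} (G G' : SimpleGraph (Fin n)) (h : G' ∈ P n) :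
    d1toProperty P G ≤ d1dist G G' := by
  refine csInf_le ⟨0, ?_⟩ ⟨G', h, rfl⟩
  rintro r ⟨K, _, rfl⟩
  exact d1_nonneg _ _

theorem d_ex {n : ℕ} (hne : (P n).Nonempty) (G : SimpleGraph (Fin n)) :
    ∃ G' ∈ P n, d1toProperty P G = d1dist G G' := by
  have hfin : { r : ℝ | ∃ G' : SimpleGraph (Fin n), G' ∈ P n ∧ r = d1dist G G' }.Finite := by
    refine (Set.finite_range (fun G' => d1dist G G')).subset ?_
    rintro r ⟨K, _, rfl⟩
    exact ⟨K, rfl⟩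
  obtain ⟨K, hK⟩ := hne
  have hne' : { r : ℝ | ∃ G' : SimpleGraph (Fin n), G' ∈ P n ∧ r = d1dist G G' }.Nonempty :=
    ⟨_, K, hK, rfl⟩
  exact hne'.csInf_mem hfin

theorem d_nonneg {n : ℕ} (hne : (P n).Nonempty) (G : SimpleGraph (Fin n)) :
    0 ≤ d1toProperty P G := by
  obtain ⟨K, _, h⟩ := d_ex hne G
  rw [h]; exact d1_nonneg _ _

theorem d_le_one {n : ℕ} (hne : (P n).Nonempty) (G : SimpleGraph (Fin n)) :
    d1toProperty P G ≤ 1 := by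
  obtain ⟨K, _, h⟩ := d_ex hne G
  rw [h]; exact d1_le_one _ _

noncomputable def ff (P : ∀ n : ℕ, Set (SimpleGraph (Fin n))) (n : ℕ) (p : ℝ) : ℝ :=
  ∑ H : SimpleGraph (Fin n), wt p n H * d1toProperty P H
end

theorem perm_inv {n N : ℕ} (φ ψ : Fin n ↪ Fin N) (T : (Fin n ↪ Fin N) → ℝ) :
    ∑ σ : Equiv.Perm (Fin N), T (φ.trans σ.toEmbedding)
      = ∑ σ : Equiv.Perm (Fin N), T (ψ.trans σ.toEmbedding) := by
  obtain ⟨τ, hτ⟩ : ∃ τ : Equiv.Perm (Fin N), ∀ a, τ (φ a) = ψ a := by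
    have := (Equiv.Perm.isMultiplyPretransitive (Fin N) n).exists_smul_eq φ ψ
    obtain ⟨g, hg⟩ := this
    exact ⟨g, fun a => by rw [← hg]; rfl⟩
  rw [← Equiv.sum_comp (Equiv.mulRight τ)]
  refine Finset.sum_congr rfl fun σ _ => ?_
  congr 1
  ext a
  simp [hτ]

theorem perm_avg {N : ℕ} (x y : Fin N) (hxy : x ≠ y) (g : Fin N → Fin N → ℝ)
    (hg : ∀ x, g x x = 0) :
    ((N : ℝ) * ((N : ℝ) - 1)) * ∑ σ : Equiv.Perm (Fin N), g (σ x) (σ y)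
      = (Fintype.card (Equiv.Perm (Fin N)) : ℝ) * ∑ a, ∑ b, g a b := by
  have h1 : ∀ a b : Fin N, ∑ σ : Equiv.Perm (Fin N), g (σ a) (σ b) =
      if a = b then 0 else ∑ σ : Equiv.Perm (Fin N), g (σ x) (σ y) := by
    intro a b
    split_ifs with h
    · subst h; simp [hg]
    · have := perm_inv (N := N) (n := 2) ⟨![a, b], by
        intro i j; fin_cases i <;> fin_cases j <;> simp [h, Ne.symm h]⟩ ⟨![x, y], by
        intro i j; fin_cases i <;> fin_cases j <;> simp [hxy, Ne.symm hxy]⟩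
        (fun φ => g (φ 0) (φ 1))
      exact this
  rw [← sum_offdiag]
  simp only [← h1]
  have h2 : ∑ a, ∑ b, ∑ σ : Equiv.Perm (Fin N), g (σ a) (σ b) =
      ∑ σ : Equiv.Perm (Fin N), ∑ a, ∑ b, g (σ a) (σ b) := by
    rw [Finset.sum_comm]
    simp only [Finset.sum_comm (s := (Finset.univ : Finset (Fin N)))
      (t := (Finset.univ : Finset (Equiv.Perm (Fin N))))]
    refine Finset.sum_congr rfl fun σ _ => Finset.sum_comm
  rw [h2]
  have h3 : ∀ σ : Equiv.Perm (Fin N), ∑ a, ∑ b, g (σ a) (σ b) = ∑ a, ∑ b, g a b := by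
    intro σ
    rw [Equiv.sum_comp σ (fun a => ∑ b, g a (σ b))]
    exact Finset.sum_congr rfl fun a _ => Equiv.sum_comp σ (fun b => g a b)
  simp [h3]

/-- bound for an embedded copy -/
theorem d_copy {P : ∀ n : ℕ, Set (SimpleGraph (Fin n))} (hP : IsHereditary P) {n N : ℕ}
    (φ : Fin n ↪ Fin N) (R R' : SimpleGraph (Fin N)) (hR : R' ∈ P N) :
    d1toProperty P (R.comap φ) ≤
      (∑ u, ∑ v, df R R' (φ u) (φ v)) / ((n : ℝ) * ((n : ℝ) - 1)) := by
  have := d_le (R.comap φ) (R'.comap φ) (her hP φ R' hR)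
  rw [d1_eq] at this
  exact this

theorem d_small {P : ∀ n : ℕ, Set (SimpleGraph (Fin n))} (hne : ∀ n, (P n).Nonempty) {n : ℕ}
    (hn : n < 2) (G : SimpleGraph (Fin n)) : d1toProperty P G = 0 := by
  obtain ⟨K, _, h⟩ := d_ex (hne n) G
  rw [h, d1_eq]
  interval_cases n <;> simp

theorem ff_mono {P : ∀ n : ℕ, Set (SimpleGraph (Fin n))} (hP : IsHereditary P)
    (hne : ∀ n, (P n).Nonempty) {p : ℝ} (hp : p ∈ Set.Icc (0:ℝ) 1) {n N : ℕ} (hnN : n ≤ N) :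
    ff P n p ≤ ff P N p := by
  rcases lt_or_ge n 2 with hn | hn
  · have : ff P n p = 0 := by simp [ff, d_small hne hn]
    rw [this]
    exact Finset.sum_nonneg fun H _ => mul_nonneg (wt_nonneg hp H) (d_nonneg (hne N) H)
  have hn' : (0:ℝ) < (n : ℝ) * ((n : ℝ) - 1) := by
    have : (2:ℝ) ≤ n := by exact_mod_cast hn
    apply mul_pos <;> linarith
  have hN' : (0:ℝ) < (N : ℝ) * ((N : ℝ) - 1) := by
    have : (2:ℝ) ≤ N := by exact_mod_cast hn.trans hnN
    apply mul_pos <;> linarith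
  let φ : Fin n ↪ Fin N := Fin.castLEEmb hnN
  have hmarg : ∀ ψ : Fin n ↪ Fin N, ff P n p = ∑ R, wt p N R * d1toProperty P (R.comap ψ) := by
    intro ψ
    unfold ff
    simp only [← prob_emb p ψ, Finset.sum_mul]
    rw [Finset.sum_comm]
    refine Finset.sum_congr rfl fun R _ => ?_
    simp only [mul_assoc, ← Finset.mul_sum]
    simp
  set C : ℝ := (Fintype.card (Equiv.Perm (Fin N)) : ℝ) with hC
  have hCpos : 0 < C := by rw [hC]; exact_mod_cast Fintype.card_pos
  choose R' hR' hd using fun R : SimpleGraph (Fin N) => d_ex (hne N) R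
  have hmain : ∀ R : SimpleGraph (Fin N),
      ∑ σ : Equiv.Perm (Fin N), d1toProperty P (R.comap (φ.trans σ.toEmbedding))
        ≤ C * d1toProperty P R := by
    intro R
    calc _ ≤ ∑ σ : Equiv.Perm (Fin N), (∑ u, ∑ v, df R (R' R) (σ (φ u)) (σ (φ v))) /
          ((n : ℝ) * ((n : ℝ) - 1)) :=
          Finset.sum_le_sum fun σ _ => d_copy hP (φ.trans σ.toEmbedding) R (R' R) (hR' R)
      _ = (∑ u, ∑ v, ∑ σ : Equiv.Perm (Fin N), df R (R' R) (σ (φ u)) (σ (φ v))) /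
          ((n : ℝ) * ((n : ℝ) - 1)) := by
          rw [← Finset.sum_div, Finset.sum_comm]
          congr 1
          exact Finset.sum_congr rfl fun u _ => Finset.sum_comm
      _ = (∑ u : Fin n, ∑ v : Fin n, if u = v then 0 else C * d1toProperty P R) /
          ((n : ℝ) * ((n : ℝ) - 1)) := by
          congr 1
          refine Finset.sum_congr rfl fun u _ => Finset.sum_congr rfl fun v _ => ?_
          split_ifs with h
          · subst h; simp [df_self]
          · have := perm_avg (φ u) (φ v) (fun h' => h (φ.injective h')) (df R (R' R))
              (df_self _ _)
            rw [hd, d1_eq, ← mul_div_assoc, eq_div_iff hN'.ne', ← this]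
            ring
      _ = _ := by rw [sum_offdiag]; exact mul_div_cancel_left₀ _ hn'.ne'
  have : C * ff P n p ≤ C * ff P N p := by
    calc C * ff P n p = ∑ σ : Equiv.Perm (Fin N),
          ∑ R, wt p N R * d1toProperty P (R.comap (φ.trans σ.toEmbedding)) := by
          simp [← hmarg, hC]
      _ = ∑ R, wt p N R * ∑ σ : Equiv.Perm (Fin N),
          d1toProperty P (R.comap (φ.trans σ.toEmbedding)) := by
          rw [Finset.sum_comm]; simp only [Finset.mul_sum]
      _ ≤ ∑ R, wt p N R * (C * d1toProperty P R) :=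
          Finset.sum_le_sum fun R _ => mul_le_mul_of_nonneg_left (hmain R) (wt_nonneg hp R)
      _ = _ := by
          unfold ff; rw [Finset.mul_sum]
          exact Finset.sum_congr rfl fun R _ => by ring
  exact le_of_mul_le_mul_left this hCpos

theorem lip_aux {α : Type} [DecidableEq α] (c p q : ℝ) (hp : p ∈ Set.Icc (0:ℝ) 1) (hq : q ∈ Set.Icc (0:ℝ) 1)
    (E : Finset α) : ∀ D : Finset α → ℝ, (∀ a S, |D (insert a S) - D S| ≤ c) →
    |∑ T ∈ E.powerset, p ^ T.card * (1 - p) ^ (E.card - T.card) * D T -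
      ∑ T ∈ E.powerset, q ^ T.card * (1 - q) ^ (E.card - T.card) * D T| ≤ E.card * c * |p - q| := by
  induction E using Finset.induction_on with
  | empty => intro D hD; simp
  | insert a E ha ih =>
    intro D hD
    have hsplit : ∀ r : ℝ, ∑ T ∈ (insert a E).powerset,
        r ^ T.card * (1 - r) ^ ((insert a E).card - T.card) * D T =
        (1 - r) * (∑ T ∈ E.powerset, r ^ T.card * (1 - r) ^ (E.card - T.card) * D T) +
        r * (∑ T ∈ E.powerset, r ^ T.card * (1 - r) ^ (E.card - T.card) * D (insert a T)) := by
      intro r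
      rw [Finset.sum_powerset_insert ha, Finset.mul_sum, Finset.mul_sum]
      congr 1
      · refine Finset.sum_congr rfl fun T hT => ?_
        have hc := Finset.card_le_card (Finset.mem_powerset.1 hT)
        rw [Finset.card_insert_of_notMem ha, Nat.succ_sub hc, pow_succ]
        ring
      · refine Finset.sum_congr rfl fun T hT => ?_
        have hTa : a ∉ T := fun h => ha (Finset.mem_powerset.1 hT h)
        rw [Finset.card_insert_of_notMem ha, Finset.card_insert_of_notMem hTa,
          Nat.add_sub_add_right, pow_succ]
        ring
    have i1 := ih D hD
    have i2 := ih (fun T => D (insert a T)) (fun b S => by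
      rw [Finset.insert_comm]; exact hD b _)
    rw [hsplit p, hsplit q]
    have i3 : |(∑ T ∈ E.powerset, q ^ T.card * (1 - q) ^ (E.card - T.card) * D (insert a T)) -
        (∑ T ∈ E.powerset, q ^ T.card * (1 - q) ^ (E.card - T.card) * D T)| ≤ c := by
      rw [← Finset.sum_sub_distrib]
      refine (Finset.abs_sum_le_sum_abs _ _).trans ?_
      have : ∑ T ∈ E.powerset, q ^ T.card * (1 - q) ^ (E.card - T.card) * c = c := by
        rw [← Finset.sum_mul, Finset.sum_pow_mul_eq_add_pow]; simp
      refine le_trans (Finset.sum_le_sum fun T _ => ?_) this.le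
      rw [← mul_sub, abs_mul]
      have h0 : 0 ≤ q ^ T.card * (1 - q) ^ (E.card - T.card) :=
        mul_nonneg (pow_nonneg hq.1 _) (pow_nonneg (by linarith [hq.2]) _)
      rw [abs_of_nonneg h0]
      exact mul_le_mul_of_nonneg_left (hD a T) h0
    generalize (∑ T ∈ E.powerset, p ^ T.card * (1 - p) ^ (E.card - T.card) * D T) = x1 at *
    generalize (∑ T ∈ E.powerset, q ^ T.card * (1 - q) ^ (E.card - T.card) * D T) = x2 at *
    generalize (∑ T ∈ E.powerset, p ^ T.card * (1 - p) ^ (E.card - T.card) * D (insert a T)) = y1 at *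
    generalize (∑ T ∈ E.powerset, q ^ T.card * (1 - q) ^ (E.card - T.card) * D (insert a T)) = y2 at *
    have e : (1 - p) * x1 + p * y1 - ((1 - q) * x2 + q * y2) =
      ((1 - p) * (x1 - x2) + p * (y1 - y2)) + (p - q) * (y2 - x2) := by ring
    rw [e, Finset.card_insert_of_notMem ha]
    refine (abs_add_le _ _).trans ?_
    have j1 : |(1 - p) * (x1 - x2) + p * (y1 - y2)| ≤ E.card * c * |p - q| := by
      refine (abs_add_le _ _).trans ?_
      rw [abs_mul, abs_mul, abs_of_nonneg hp.1, abs_of_nonneg (by linarith [hp.2] : 0 ≤ 1 - p)]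
      nlinarith [hp.1, hp.2]
    have j2 : |(p - q) * (y2 - x2)| ≤ |p - q| * c := by
      rw [abs_mul]; exact mul_le_mul_of_nonneg_left i3 (abs_nonneg _)
    push_cast
    nlinarith

theorem d1_tri {n : ℕ} (A B C : SimpleGraph (Fin n)) :
    d1dist A C ≤ d1dist A B + d1dist B C := by
  rw [d1_eq, d1_eq, d1_eq, ← add_div]
  refine div_le_div_of_nonneg_right ?_ (nn_nonneg n)
  rw [← Finset.sum_add_distrib]
  refine Finset.sum_le_sum fun x _ => ?_
  rw [← Finset.sum_add_distrib]
  refine Finset.sum_le_sum fun y _ => ?_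
  unfold df
  by_cases h1 : A.Adj x y <;> by_cases h2 : B.Adj x y <;> by_cases h3 : C.Adj x y <;> simp [h1, h2, h3]

theorem d1_symm {n : ℕ} (A B : SimpleGraph (Fin n)) : d1dist A B = d1dist B A := by
  unfold d1dist
  simp only [iff_comm]

theorem d_lip {P : ∀ n : ℕ, Set (SimpleGraph (Fin n))} (hne : ∀ n, (P n).Nonempty) {n : ℕ}
    (A B : SimpleGraph (Fin n)) : |d1toProperty P A - d1toProperty P B| ≤ d1dist A B := by
  have key : ∀ A B : SimpleGraph (Fin n), d1toProperty P A ≤ d1dist A B + d1toProperty P B := by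
    intro A B
    obtain ⟨K, hK, h⟩ := d_ex (hne n) B
    rw [h]
    exact (d_le A K hK).trans (d1_tri _ _ _)
  rw [abs_le]
  have h1 := key A B
  have h2 := key B A
  rw [d1_symm B A] at h2
  constructor <;> linarith

theorem d1_insert {n : ℕ} (e : Sym2 (Fin n)) (S : Finset (Sym2 (Fin n))) :
    d1dist (SimpleGraph.fromEdgeSet ((insert e S : Finset (Sym2 (Fin n))) : Set (Sym2 (Fin n))))
      (SimpleGraph.fromEdgeSet (S : Set (Sym2 (Fin n)))) ≤ 2 / ((n : ℝ) * ((n : ℝ) - 1)) := by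
  unfold d1dist
  refine div_le_div_of_nonneg_right ?_ (nn_nonneg n)
  induction e with
  | h a b =>
    have h2 : ((2 : ℕ) : ℝ) = 2 := by norm_num
    rw [← h2, Nat.cast_le]
    refine (Finset.card_le_card (t := {(a, b), (b, a)}) ?_).trans Finset.card_le_two
    rintro ⟨x, y⟩ h
    simp only [Finset.mem_filter, SimpleGraph.fromEdgeSet_adj, Finset.mem_coe,
      Finset.mem_insert] at h
    have : s(x, y) = s(a, b) := by tauto
    rw [Sym2.eq_iff] at this
    simp only [Finset.mem_insert, Finset.mem_singleton, Prod.mk.injEq]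
    exact this

theorem ff_lip {P : ∀ n : ℕ, Set (SimpleGraph (Fin n))} (hne : ∀ n, (P n).Nonempty) (n : ℕ)
    (p q : ℝ) (hp : p ∈ Set.Icc (0:ℝ) 1) (hq : q ∈ Set.Icc (0:ℝ) 1) :
    |ff P n p - ff P n q| ≤ |p - q| := by
  let D : Finset (Sym2 (Fin n)) → ℝ :=
    fun T => d1toProperty P (SimpleGraph.fromEdgeSet (T : Set (Sym2 (Fin n))))
  have hff : ∀ r, ff P n r =
      ∑ T ∈ (EE n).powerset, r ^ T.card * (1 - r) ^ ((EE n).card - T.card) * D T := by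
    intro r
    rw [← sum_graph]
    unfold ff wt
    refine Finset.sum_congr rfl fun H _ => ?_
    simp [D, card_EE]
  rw [hff, hff]
  refine (lip_aux (2 / ((n : ℝ) * ((n : ℝ) - 1))) p q hp hq (EE n) D
    (fun e S => (d_lip hne _ _).trans (d1_insert e S))).trans ?_
  refine mul_le_of_le_one_left (abs_nonneg _) ?_
  rw [card_EE, Nat.cast_choose_two]
  rw [← mul_div_assoc, div_mul_cancel₀ _ (by norm_num : (2:ℝ) ≠ 0)]
  exact div_self_le_one _

theorem second_moment {Ω : Type} [Fintype Ω] (w : Ω → ℝ) (hw : ∀ x, 0 ≤ w x) (hw1 : ∑ x, w x = 1)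
    (K : ℕ) (hK : 0 < K) (B : Ω → ℝ) (h : Fin K → Ω → ℝ) (b q : ℝ)
    (hbq0 : 0 ≤ b * q ^ 2) (hbq1 : b * q ≤ 1)
    (hBB : ∀ x, B x * B x = B x) (hhB : ∀ i x, h i x * B x = h i x)
    (hhh : ∀ i x, h i x * h i x = h i x)
    (EB : ∑ x, w x * B x = b) (Eh : ∀ i, ∑ x, w x * h i x = b * q)
    (Ehh : ∀ i j, i ≠ j → ∑ x, w x * (h i x * h j x) = b * q ^ 2)
    (D : Ω → ℝ) (hD0 : ∀ x, 0 ≤ D x) (hD1 : ∀ x, D x ≤ 1) :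
    ∑ j, ∑ x, w x * (D x * h j x) ≤ K * q * (∑ x, w x * (D x * B x)) + √K := by
  set t : ℝ := √K with ht
  have htpos : 0 < t := Real.sqrt_pos.2 (by exact_mod_cast hK)
  have htt : t * t = K := Real.mul_self_sqrt (Nat.cast_nonneg _)
  let Z : Ω → ℝ := fun x => ∑ j, (h j x - q * B x)
  have hcov : ∀ i j, ∑ x, w x * ((h i x - q * B x) * (h j x - q * B x)) =
      if i = j then b * q - b * q ^ 2 else 0 := by
    intro i j
    have e : ∀ x, w x * ((h i x - q * B x) * (h j x - q * B x)) =
        w x * (h i x * h j x) - q * (w x * h i x) - q * (w x * h j x) + q ^ 2 * (w x * B x) := by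
      intro x
      have e1 : w x * ((h i x - q * B x) * (h j x - q * B x)) =
        w x * (h i x * h j x) - q * (w x * (h i x * B x)) - q * (w x * (h j x * B x)) +
          q ^ 2 * (w x * (B x * B x)) := by ring
      rw [e1, hBB, hhB, hhB]
    simp only [e, Finset.sum_add_distrib, Finset.sum_sub_distrib, ← Finset.mul_sum, EB, Eh]
    split_ifs with hij
    · subst hij
      simp only [hhh, Eh]; ring
    · rw [Ehh i j hij]; ring
  have hZ2 : ∑ x, w x * (Z x * Z x) ≤ K := by
    have : ∑ x, w x * (Z x * Z x) =
        ∑ i, ∑ j, ∑ x, w x * ((h i x - q * B x) * (h j x - q * B x)) := by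
      have e : ∀ x, w x * (Z x * Z x) =
          ∑ i, ∑ j, w x * ((h i x - q * B x) * (h j x - q * B x)) := by
        intro x
        simp only [Z]
        rw [Finset.sum_mul_sum]
        simp only [Finset.mul_sum]
      simp only [e]
      rw [Finset.sum_comm]
      exact Finset.sum_congr rfl fun i _ => Finset.sum_comm
    rw [this]
    simp only [hcov]
    simp
    have hK0 : (0:ℝ) ≤ K := Nat.cast_nonneg _
    nlinarith
  have hDZ : ∑ x, w x * (D x * Z x) ≤ t := by
    have h1 : ∀ x, D x * Z x ≤ (Z x * Z x / t + t) / 2 := by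
      intro x
      have h2 : D x * Z x ≤ |Z x| := by
        calc D x * Z x ≤ D x * |Z x| := mul_le_mul_of_nonneg_left (le_abs_self _) (hD0 x)
          _ ≤ _ := mul_le_of_le_one_left (abs_nonneg _) (hD1 x)
      have h3 : |Z x| ≤ (Z x * Z x / t + t) / 2 := by
        rw [le_div_iff₀ (by norm_num), ← sub_le_iff_le_add, le_div_iff₀ htpos]
        have := abs_mul_abs_self (Z x)
        nlinarith [sq_nonneg (|Z x| - t)]
      exact h2.trans h3
    calc ∑ x, w x * (D x * Z x) ≤ ∑ x, w x * ((Z x * Z x / t + t) / 2) :=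
          Finset.sum_le_sum fun x _ => mul_le_mul_of_nonneg_left (h1 x) (hw x)
      _ = ((∑ x, w x * (Z x * Z x)) / t + t * ∑ x, w x) / 2 := by
          rw [Finset.mul_sum, Finset.sum_div, ← Finset.sum_add_distrib, Finset.sum_div]
          exact Finset.sum_congr rfl fun x _ => by ring
      _ ≤ (t + t * 1) / 2 := by
          rw [hw1]
          have : (∑ x, w x * (Z x * Z x)) / t ≤ t := by
            rw [div_le_iff₀ htpos, htt]; exact hZ2
          linarith
      _ = t := by ring
  have hexp : ∑ x, w x * (D x * Z x) =
      ∑ j, ∑ x, w x * (D x * h j x) - K * q * ∑ x, w x * (D x * B x) := by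
    rw [Finset.sum_comm, Finset.mul_sum, ← Finset.sum_sub_distrib]
    refine Finset.sum_congr rfl fun x _ => ?_
    simp only [Z, Finset.sum_sub_distrib, ← Finset.mul_sum]
    simp
    ring
  linarith

theorem prop_aux {E F1 F2 A1 A2 : Prop} (h : (E ∧ F1 ∨ E ∧ F2) ↔ (A1 ∨ A2))
    (hc : F1 → F2 → (A1 ↔ A2)) (h1 : A1 → F1) (h2 : A2 → F2) : E ∧ F1 ↔ A1 := by
  tauto

theorem prob_edge (p : ℝ) {N : ℕ} (x y : Fin N) (hxy : x ≠ y) (Q : Prop) :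
    ∑ H : SimpleGraph (Fin N), wt p N H * (if (H.Adj x y ↔ Q) then 1 else 0)
      = if Q then p else 1 - p := by
  have hF : ({s(x, y)} : Finset (Sym2 (Fin N))) ⊆ EE N := by
    simpa [mem_EE] using hxy
  by_cases hQ : Q
  · have := cyl p {s(x, y)} {s(x, y)} hF le_rfl
    have e : ∀ H : SimpleGraph (Fin N),
        H.edgeFinset ∩ {s(x, y)} = {s(x, y)} ↔ (H.Adj x y ↔ Q) := by
      intro H
      rw [Finset.inter_eq_right]
      simp [hQ]
    simp only [e] at this
    rw [this]
    simp [hQ]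
  · have := cyl p {s(x, y)} ∅ hF (by simp)
    have e : ∀ H : SimpleGraph (Fin N),
        H.edgeFinset ∩ {s(x, y)} = ∅ ↔ (H.Adj x y ↔ Q) := by
      intro H
      rw [← Finset.disjoint_iff_inter_eq_empty]
      simp [hQ]
    simp only [e] at this
    rw [this]
    simp [hQ]

theorem prob_pair (p : ℝ) {n N : ℕ} (φ ψ : Fin n ↪ Fin N) (G : SimpleGraph (Fin n)) (u v : Fin n)
    (huv : u ≠ v) (hu : φ u = ψ u) (hv : φ v = ψ v)
    (hd : ∀ a b, φ a = ψ b → a = b ∧ (a = u ∨ a = v)) :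
    (∑ H : SimpleGraph (Fin N), wt p N H *
      ((if H.comap φ = G then 1 else 0) * (if H.comap ψ = G then 1 else 0))) *
      (if G.Adj u v then p else 1 - p) = wt p n G ^ 2 := by
  have hFF : FF φ ∩ FF ψ = {s(φ u, φ v)} := by
    ext e
    rw [Finset.mem_inter, mem_FF, mem_FF, Finset.mem_singleton]
    constructor
    · rintro ⟨⟨a, b, hab, rfl⟩, c, d, hcd, h⟩
      rw [Sym2.eq_iff] at h
      have h1 : (a = u ∨ a = v) ∧ (b = u ∨ b = v) := by
        rcases h with ⟨h1, h2⟩ | ⟨h1, h2⟩ <;> exact ⟨(hd _ _ h1).2, (hd _ _ h2).2⟩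
      rcases h1 with ⟨rfl | rfl, rfl | rfl⟩
      · exact absurd rfl hab
      · rfl
      · exact Sym2.eq_swap
      · exact absurd rfl hab
    · rintro rfl
      exact ⟨⟨u, v, huv, rfl⟩, u, v, huv, by rw [hu, hv]⟩
  have huvF : s(φ u, φ v) ∈ FF φ ∩ FF ψ := by rw [hFF]; simp
  have hAψ : s(φ u, φ v) ∈ AA ψ G ↔ G.Adj u v := by rw [hu, hv, mem_AA]
  have hAA : AA φ G ∩ AA ψ G = if G.Adj u v then {s(φ u, φ v)} else ∅ := by
    ext e
    have hsub : e ∈ AA φ G ∩ AA ψ G → e = s(φ u, φ v) := by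
      intro he
      have : e ∈ FF φ ∩ FF ψ := Finset.inter_subset_inter (AA_sub _ _) (AA_sub _ _) he
      rwa [hFF, Finset.mem_singleton] at this
    have hiff : s(φ u, φ v) ∈ AA φ G ∩ AA ψ G ↔ G.Adj u v := by
      rw [Finset.mem_inter, mem_AA, hAψ, and_self]
    by_cases hG : G.Adj u v
    · rw [if_pos hG, Finset.mem_singleton]
      exact ⟨hsub, fun h => h ▸ hiff.2 hG⟩
    · rw [if_neg hG]
      refine ⟨fun h => absurd (hiff.1 (hsub h ▸ h)) hG, fun h => absurd h (Finset.notMem_empty _)⟩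
  have hev : ∀ H : SimpleGraph (Fin N), (H.comap φ = G ∧ H.comap ψ = G) ↔
      H.edgeFinset ∩ (FF φ ∪ FF ψ) = AA φ G ∪ AA ψ G := by
    intro H
    rw [comap_iff, comap_iff, Finset.inter_union_distrib_left]
    constructor
    · rintro ⟨h1, h2⟩; rw [h1, h2]
    · intro h
      have cross : ∀ e, e ∈ FF φ → e ∈ FF ψ → (e ∈ AA φ G ↔ e ∈ AA ψ G) := by
        intro e h1 h2
        have : e ∈ FF φ ∩ FF ψ := Finset.mem_inter.2 ⟨h1, h2⟩
        rw [hFF, Finset.mem_singleton] at this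
        rw [this, hAψ, mem_AA]
      constructor
      · ext e
        have h1 := Finset.ext_iff.1 h e
        rw [Finset.mem_union, Finset.mem_union, Finset.mem_inter, Finset.mem_inter] at h1
        rw [Finset.mem_inter]
        exact prop_aux h1 (cross e) (@AA_sub _ _ φ G e) (@AA_sub _ _ ψ G e)
      · ext e
        have h1 := Finset.ext_iff.1 h e
        rw [Finset.mem_union, Finset.mem_union, Finset.mem_inter, Finset.mem_inter, or_comm,
          or_comm (a := e ∈ AA φ G)] at h1
        rw [Finset.mem_inter]
        exact prop_aux h1 (fun x y => (cross e y x).symm) (@AA_sub _ _ ψ G e) (@AA_sub _ _ φ G e)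
  have e1 : ∀ H : SimpleGraph (Fin N),
      ((if H.comap φ = G then 1 else 0) * (if H.comap ψ = G then 1 else 0) : ℝ) =
      if H.edgeFinset ∩ (FF φ ∪ FF ψ) = AA φ G ∪ AA ψ G then 1 else 0 := by
    intro H
    simp only [← hev]
    by_cases h1 : H.comap φ = G <;> by_cases h2 : H.comap ψ = G <;> simp [h1, h2]
  simp only [e1]
  have hsub : AA φ G ∪ AA ψ G ⊆ FF φ ∪ FF ψ := Finset.union_subset_union (AA_sub _ _) (AA_sub _ _)
  rw [cyl p _ _ (Finset.union_subset (FF_sub φ) (FF_sub ψ)) hsub]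
  have c1 := Finset.card_union_add_card_inter (FF φ) (FF ψ)
  have c2 := Finset.card_union_add_card_inter (AA φ G) (AA ψ G)
  have c3 := Finset.card_le_card hsub
  have c4 := Finset.card_le_card (edge_subset G)
  rw [hFF, Finset.card_singleton] at c1
  rw [hAA] at c2
  have cF : ∀ χ : Fin n ↪ Fin N, (FF χ).card = n.choose 2 := fun χ => by simp [FF, card_EE]
  have cA : ∀ χ : Fin n ↪ Fin N, (AA χ G).card = G.edgeFinset.card := fun χ => by simp [AA]
  rw [cF, cF] at c1
  rw [cA, cA] at c2
  rw [card_EE] at c4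
  unfold wt
  generalize (AA φ G ∪ AA ψ G).card = x at *
  generalize (FF φ ∪ FF ψ).card = y at *
  generalize G.edgeFinset.card = e at *
  generalize n.choose 2 = c at *
  by_cases hG : G.Adj u v
  · rw [if_pos hG] at c2 ⊢
    rw [Finset.card_singleton] at c2
    have y1 : y - x = (c - e) * 2 := by omega
    rw [y1, mul_pow, ← pow_mul, ← pow_mul, mul_right_comm, ← pow_succ, c2, ← mul_two]
  · rw [if_neg hG] at c2 ⊢
    rw [Finset.card_empty] at c2
    have y1 : y - x + 1 = (c - e) * 2 := by omega
    have x1 : x = e * 2 := by omega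
    rw [mul_assoc, ← pow_succ, y1, mul_pow, ← pow_mul, ← pow_mul, x1]

theorem planted_one {p : ℝ} (hp : p ∈ Set.Icc (0:ℝ) 1) {n N K : ℕ} (hK : 0 < K)
    (G : SimpleGraph (Fin n)) (u v : Fin n) (huv : u ≠ v) (ψ : Fin K → Fin n ↪ Fin N) (x y : Fin N)
    (hx : ∀ j, ψ j u = x) (hy : ∀ j, ψ j v = y)
    (hd : ∀ i j a b, i ≠ j → ψ i a = ψ j b → a = b ∧ (a = u ∨ a = v))
    (hb : 0 < if G.Adj u v then p else 1 - p)
    (D : SimpleGraph (Fin N) → ℝ) (hD0 : ∀ R, 0 ≤ D R) (hD1 : ∀ R, D R ≤ 1) :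
    ∑ j, ∑ R, wt p N R * (D R * (if R.comap (ψ j) = G then 1 else 0)) ≤
      K * (wt p n G / (if G.Adj u v then p else 1 - p)) *
        (∑ R, wt p N R * (D R * (if (R.Adj x y ↔ G.Adj u v) then 1 else 0))) + √K := by
  have hxy : x ≠ y := by
    rw [← hx ⟨0, hK⟩, ← hy ⟨0, hK⟩]
    exact fun h => huv ((ψ _).injective h)
  set b : ℝ := if G.Adj u v then p else 1 - p with hbdef
  have hbq : b * (wt p n G / b) = wt p n G := mul_div_cancel₀ _ hb.ne'
  refine second_moment (wt p N) (wt_nonneg hp) (wt_sum p N) K hK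
    (fun R => if (R.Adj x y ↔ G.Adj u v) then 1 else 0)
    (fun j R => if R.comap (ψ j) = G then 1 else 0) b (wt p n G / b) ?_ ?_ ?_ ?_ ?_ ?_ ?_ ?_ D hD0 hD1
  · exact mul_nonneg hb.le (sq_nonneg _)
  · rw [hbq]
    calc wt p n G ≤ ∑ H, wt p n H :=
          Finset.single_le_sum (fun H _ => wt_nonneg hp H) (Finset.mem_univ G)
      _ = 1 := wt_sum p n
  · intro R; simp
  · intro j R
    by_cases h : R.comap (ψ j) = G
    · have : R.Adj x y ↔ G.Adj u v := by
        rw [← h, SimpleGraph.comap_adj, hx, hy]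
      simp [h, this]
    · simp [h]
  · intro j R; simp
  · exact prob_edge p x y hxy _
  · intro j
    rw [hbq]; exact prob_emb p (ψ j) G
  · intro i j hij
    have := prob_pair p (ψ i) (ψ j) G u v huv (by rw [hx, hx]) (by rw [hy, hy])
      (fun a b => hd i j a b hij)
    rw [← hbdef] at this
    rw [← eq_div_iff hb.ne'] at this
    rw [this]
    field_simp

/-- The `j`-th member of the sunflower of embeddings with kernel `{u, v}`. -/
def sun {n K : ℕ} (hK : 0 < K) (u v : Fin n) (j : Fin K) : Fin n ↪ Fin (n * K) where
  toFun a := finProdFinEquiv (a, if a = u ∨ a = v then ⟨0, hK⟩ else j)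
  inj' a b h := by
    have := finProdFinEquiv.injective h
    exact (Prod.mk.inj this).1

theorem sun_apply {n K : ℕ} (hK : 0 < K) (u v : Fin n) (j : Fin K) (a : Fin n) :
    sun hK u v j a = finProdFinEquiv (a, if a = u ∨ a = v then ⟨0, hK⟩ else j) := rfl

theorem sun_dis {n K : ℕ} (hK : 0 < K) (u v : Fin n) (i j : Fin K) (a b : Fin n) (hij : i ≠ j)
    (h : sun hK u v i a = sun hK u v j b) : a = b ∧ (a = u ∨ a = v) := by
  have := Prod.mk.inj (finProdFinEquiv.injective h)
  obtain ⟨rfl, h2⟩ := this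
  refine ⟨rfl, ?_⟩
  by_contra hc
  simp only [hc, if_false] at h2
  exact hij h2

theorem planted {P : ∀ n : ℕ, Set (SimpleGraph (Fin n))} (hP : IsHereditary P)
    (hne : ∀ n, (P n).Nonempty) {n : ℕ} (hn : 2 ≤ n) (G : SimpleGraph (Fin n)) {p : ℝ}
    (hp : p ∈ Set.Icc (0:ℝ) 1)
    (hpG : ∑ u, ∑ v, (if G.Adj u v then 1 else 0 : ℝ) = p * ((n : ℝ) * ((n : ℝ) - 1)))
    (hb : ∀ u v, u ≠ v → 0 < if G.Adj u v then p else 1 - p) (hw : 0 < wt p n G)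
    {K : ℕ} (hK : 0 < K) :
    d1toProperty P G ≤ ff P (n * K) p + 1 / (wt p n G * √K) := by
  set N := n * K with hN
  have hnN : n ≤ N := Nat.le_mul_of_pos_right n hK
  have hn' : (0:ℝ) < (n : ℝ) * ((n : ℝ) - 1) := by
    have : (2:ℝ) ≤ n := by exact_mod_cast hn
    apply mul_pos <;> linarith
  have hN' : (0:ℝ) < (N : ℝ) * ((N : ℝ) - 1) := by
    have : (2:ℝ) ≤ N := by exact_mod_cast hn.trans hnN
    apply mul_pos <;> linarith
  set C : ℝ := (Fintype.card (Equiv.Perm (Fin N)) : ℝ) with hC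
  have hCpos : 0 < C := by rw [hC]; exact_mod_cast Fintype.card_pos
  have hKpos : (0:ℝ) < K := by exact_mod_cast hK
  have hsK : 0 < √(K:ℝ) := Real.sqrt_pos.2 hKpos
  choose R' hR' hd using fun R : SimpleGraph (Fin N) => d_ex (hne N) R
  set nn : ℝ := (n : ℝ) * ((n : ℝ) - 1) with hnn
  set NN : ℝ := (N : ℝ) * ((N : ℝ) - 1) with hNN
  set w := wt p n G with hwdef
  let T : Fin n → Fin n → (Fin n ↪ Fin N) → ℝ := fun u v φ =>
    ∑ R, wt p N R * (df R (R' R) (φ u) (φ v) * (if R.comap φ = G then 1 else 0))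
  let φ0 : Fin n ↪ Fin N := sun hK ⟨0, by omega⟩ ⟨0, by omega⟩ ⟨0, hK⟩
  -- step 1
  have s1 : ∀ φ : Fin n ↪ Fin N, nn * d1toProperty P G * w ≤ ∑ u, ∑ v, T u v φ := by
    intro φ
    have e1 : ∑ u, ∑ v, T u v φ = ∑ R, wt p N R *
        ((∑ u, ∑ v, df R (R' R) (φ u) (φ v)) * (if R.comap φ = G then 1 else 0)) := by
      simp only [T]
      have : ∀ u, ∑ v, ∑ R, wt p N R * (df R (R' R) (φ u) (φ v) *
          (if R.comap φ = G then 1 else 0)) = ∑ R, ∑ v, wt p N R * (df R (R' R) (φ u) (φ v) *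
          (if R.comap φ = G then 1 else 0)) := fun u => Finset.sum_comm
      simp only [this]
      rw [Finset.sum_comm]
      refine Finset.sum_congr rfl fun R _ => ?_
      simp only [Finset.sum_mul, Finset.mul_sum]
    rw [e1, hwdef, ← prob_emb p φ G, Finset.mul_sum]
    refine Finset.sum_le_sum fun R _ => ?_
    by_cases h : R.comap φ = G
    · simp only [h, if_true, mul_one]
      have := d_copy hP φ R (R' R) (hR' R)
      rw [h, le_div_iff₀ hn'] at this
      rw [mul_comm]
      refine mul_le_mul_of_nonneg_left ?_ (wt_nonneg hp R)
      linarith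
    · simp [h]
  -- step 2
  let Y : Prop → ℝ := fun Q =>
    (∑ a, ∑ b, ∑ R, wt p N R * (df R (R' R) a b * (if (R.Adj a b ↔ Q) then 1 else 0))) / NN
  have hY0 : ∀ Q, 0 ≤ Y Q := by
    intro Q
    refine div_nonneg (Finset.sum_nonneg fun a _ => Finset.sum_nonneg fun b _ =>
      Finset.sum_nonneg fun R _ => mul_nonneg (wt_nonneg hp R) (mul_nonneg (df_nonneg _ _ _ _) ?_))
      hN'.le
    split_ifs <;> norm_num
  have s2 : ∀ u v, u ≠ v → ∑ σ : Equiv.Perm (Fin N), T u v (φ0.trans σ.toEmbedding) ≤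
      C * (w / (if G.Adj u v then p else 1 - p) * Y (G.Adj u v) + 1 / √K) := by
    intro u v huv
    have h1 : (K : ℝ) * ∑ σ : Equiv.Perm (Fin N), T u v (φ0.trans σ.toEmbedding) =
        ∑ σ : Equiv.Perm (Fin N), ∑ j, T u v ((sun hK u v j).trans σ.toEmbedding) := by
      refine Eq.symm (Finset.sum_comm.trans ?_)
      have hj : ∀ j, ∑ σ : Equiv.Perm (Fin N), T u v ((sun hK u v j).trans σ.toEmbedding) =
          ∑ σ : Equiv.Perm (Fin N), T u v (φ0.trans σ.toEmbedding) :=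
        fun j => perm_inv _ _ (T u v)
      simp only [hj]
      simp
    have h2 : ∀ σ : Equiv.Perm (Fin N),
        ∑ j, T u v ((sun hK u v j).trans σ.toEmbedding) ≤
        K * (w / (if G.Adj u v then p else 1 - p)) *
          (∑ R, wt p N R * (df R (R' R) (σ (sun hK u v ⟨0, hK⟩ u)) (σ (sun hK u v ⟨0, hK⟩ v)) *
            (if (R.Adj (σ (sun hK u v ⟨0, hK⟩ u)) (σ (sun hK u v ⟨0, hK⟩ v)) ↔ G.Adj u v)
              then 1 else 0))) + √K := by
      intro σ
      have hxu : ∀ j, sun hK u v j u = sun hK u v ⟨0, hK⟩ u := fun j => by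
        rw [sun_apply, sun_apply]; simp
      have hxv : ∀ j, sun hK u v j v = sun hK u v ⟨0, hK⟩ v := fun j => by
        rw [sun_apply, sun_apply]; simp
      have := planted_one hp hK G u v huv (fun j => (sun hK u v j).trans σ.toEmbedding)
        (σ (sun hK u v ⟨0, hK⟩ u)) (σ (sun hK u v ⟨0, hK⟩ v))
        (fun j => by rw [← hxu j]; rfl) (fun j => by rw [← hxv j]; rfl)
        (fun i j a b hij h => sun_dis hK u v i j a b hij (σ.injective h)) (hb u v huv)
        (fun R => df R (R' R) (σ (sun hK u v ⟨0, hK⟩ u)) (σ (sun hK u v ⟨0, hK⟩ v)))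
        (fun R => df_nonneg _ _ _ _) (fun R => df_le _ _ _ _)
      refine le_trans (le_of_eq ?_) this
      refine Finset.sum_congr rfl fun j _ => ?_
      simp only [T, Function.Embedding.trans_apply, Equiv.coe_toEmbedding, hxu j, hxv j]
    have h3 := perm_avg (sun hK u v ⟨0, hK⟩ u) (sun hK u v ⟨0, hK⟩ v)
      (fun h => huv ((sun hK u v _).injective h))
      (fun a b => ∑ R, wt p N R * (df R (R' R) a b * (if (R.Adj a b ↔ G.Adj u v) then 1 else 0)))
      (fun a => by simp [df_self])
    have h4 := Finset.sum_le_sum fun σ (_ : σ ∈ Finset.univ) => h2 σ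
    rw [← h1, Finset.sum_add_distrib, ← Finset.mul_sum] at h4
    have h5 : ∑ σ : Equiv.Perm (Fin N), (∑ R, wt p N R *
        (df R (R' R) (σ (sun hK u v ⟨0, hK⟩ u)) (σ (sun hK u v ⟨0, hK⟩ v)) *
            (if (R.Adj (σ (sun hK u v ⟨0, hK⟩ u)) (σ (sun hK u v ⟨0, hK⟩ v)) ↔ G.Adj u v)
              then 1 else 0))) = C * Y (G.Adj u v) := by
      simp only [Y]
      rw [← mul_div_assoc, eq_div_iff hN'.ne', ← h3]
      ring
    rw [h5] at h4
    have h6 : ∑ _σ : Equiv.Perm (Fin N), √(K:ℝ) = K * (C * (1 / √K)) := by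
      simp only [Finset.sum_const, Finset.card_univ, nsmul_eq_mul, ← hC]
      have := Real.mul_self_sqrt hKpos.le
      field_simp
      linarith
    rw [h6] at h4
    refine le_of_mul_le_mul_left (h4.trans (le_of_eq ?_)) hKpos
    ring
  -- step 3
  have hYY : Y True + Y False = ff P N p := by
    have : ff P N p = (∑ a, ∑ b, ∑ R, wt p N R * df R (R' R) a b) / NN := by
      have h1 : ∀ a, ∑ b, ∑ R, wt p N R * df R (R' R) a b = ∑ R, ∑ b, wt p N R * df R (R' R) a b :=
        fun a => Finset.sum_comm
      simp only [h1]
      rw [Finset.sum_comm, Finset.sum_div]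
      unfold ff
      refine Finset.sum_congr rfl fun R _ => ?_
      rw [hd, d1_eq, ← mul_div_assoc]
      simp only [Finset.mul_sum]
      rfl
    rw [this]
    simp only [Y]
    rw [← add_div]
    congr 1
    simp only [← Finset.sum_add_distrib]
    refine Finset.sum_congr rfl fun a _ => Finset.sum_congr rfl fun b _ =>
      Finset.sum_congr rfl fun R _ => ?_
    by_cases h : R.Adj a b <;> simp [h]
  have s3 : ∑ u, ∑ v, (if u = v then 0 else
      w / (if G.Adj u v then p else 1 - p) * Y (G.Adj u v)) ≤ nn * w * ff P N p := by
    have h1 : ∀ u v : Fin n, (if u = v then 0 else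
        w / (if G.Adj u v then p else 1 - p) * Y (G.Adj u v)) =
        (if G.Adj u v then 1 else 0) * (w / p * Y True) +
        ((if u = v then 0 else 1) - (if G.Adj u v then 1 else 0)) * (w / (1 - p) * Y False) := by
      intro u v
      by_cases h : u = v
      · subst h; simp
      · by_cases h2 : G.Adj u v <;> simp [h, h2]
    simp only [h1, Finset.sum_add_distrib, ← Finset.sum_mul, Finset.sum_sub_distrib, hpG,
      sum_offdiag]
    rw [← hYY, ← hnn]
    have a1 : p * nn * (w / p * Y True) ≤ nn * w * Y True := by
      rcases eq_or_ne p 0 with h | h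
      · simp only [h, zero_mul]
        exact mul_nonneg (mul_nonneg hn'.le hw.le) (hY0 _)
      · apply le_of_eq; field_simp
    have a2 : (nn * 1 - p * nn) * (w / (1 - p) * Y False) ≤ nn * w * Y False := by
      rcases eq_or_ne (1 - p) 0 with h | h
      · have : p = 1 := by linarith
        simp only [this, one_mul, mul_one, sub_self, zero_mul]
        exact mul_nonneg (mul_nonneg hn'.le hw.le) (hY0 _)
      · apply le_of_eq
        have : nn * 1 - p * nn = (1 - p) * nn := by ring
        rw [this]
        field_simp
    linarith
  -- conclusion
  have t1 : C * (nn * d1toProperty P G * w) ≤ C * (nn * w * ff P N p + nn * (1 / √K)) := by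
    calc C * (nn * d1toProperty P G * w)
        = ∑ _σ : Equiv.Perm (Fin N), nn * d1toProperty P G * w := by
          simp [hC]
      _ ≤ ∑ σ : Equiv.Perm (Fin N), ∑ u, ∑ v, T u v (φ0.trans σ.toEmbedding) :=
          Finset.sum_le_sum fun σ _ => s1 _
      _ = ∑ u, ∑ v, ∑ σ : Equiv.Perm (Fin N), T u v (φ0.trans σ.toEmbedding) := by
          rw [Finset.sum_comm]
          exact Finset.sum_congr rfl fun u _ => Finset.sum_comm
      _ ≤ ∑ u, ∑ v, (C * (if u = v then 0 else
            w / (if G.Adj u v then p else 1 - p) * Y (G.Adj u v)) +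
            C * (if u = v then 0 else 1 / √K)) := by
          refine Finset.sum_le_sum fun u _ => Finset.sum_le_sum fun v _ => ?_
          by_cases h : u = v
          · subst h; simp [T, df_self]
          · rw [if_neg h, if_neg h, ← mul_add]
            exact s2 u v h
      _ = C * (∑ u, ∑ v, (if u = v then 0 else
            w / (if G.Adj u v then p else 1 - p) * Y (G.Adj u v))) + C * (nn * (1 / √K)) := by
          rw [hnn, ← sum_offdiag]
          simp only [Finset.sum_add_distrib, Finset.mul_sum]
      _ ≤ _ := by
          rw [mul_add]
          have := mul_le_mul_of_nonneg_left s3 hCpos.le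
          linarith
  have t2 := le_of_mul_le_mul_left t1 hCpos
  have t3 : (nn * w) * d1toProperty P G ≤ (nn * w) * (ff P N p + 1 / (w * √K)) := by
    have : (nn * w) * (ff P N p + 1 / (w * √K)) = nn * w * ff P N p + nn * (1 / √K) := by
      field_simp
    rw [this]; linarith
  exact le_of_mul_le_mul_left t3 (mul_pos hn' hw)

theorem ff_le_one {P : ∀ n : ℕ, Set (SimpleGraph (Fin n))} (hne : ∀ n, (P n).Nonempty) (n : ℕ)
    {p : ℝ} (hp : p ∈ Set.Icc (0:ℝ) 1) : ff P n p ≤ 1 := by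
  rw [← wt_sum p n]
  exact Finset.sum_le_sum fun H _ => mul_le_of_le_one_right (wt_nonneg hp H) (d_le_one (hne n) H)

theorem upper {P : ∀ n : ℕ, Set (SimpleGraph (Fin n))} (hP : IsHereditary P)
    (hne : ∀ n, (P n).Nonempty) {n : ℕ} (G : SimpleGraph (Fin n)) :
    ∃ p ∈ Set.Icc (0:ℝ) 1, d1toProperty P G ≤ ⨆ N, ff P N p := by
  have hbdd : ∀ p ∈ Set.Icc (0:ℝ) 1, BddAbove (Set.range fun N => ff P N p) := by
    rintro p hp
    refine ⟨1, ?_⟩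
    rintro _ ⟨N, rfl⟩
    exact ff_le_one hne N hp
  rcases lt_or_ge n 2 with hn | hn
  · have h0 : (0:ℝ) ∈ Set.Icc (0:ℝ) 1 := ⟨le_rfl, zero_le_one⟩
    refine ⟨0, h0, ?_⟩
    rw [d_small hne hn]
    refine le_trans ?_ (le_ciSup (hbdd 0 h0) 0)
    exact Finset.sum_nonneg fun H _ => mul_nonneg (wt_nonneg h0 H) (d_nonneg (hne _) H)
  have hn' : (0:ℝ) < (n : ℝ) * ((n : ℝ) - 1) := by
    have : (2:ℝ) ≤ n := by exact_mod_cast hn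
    apply mul_pos <;> linarith
  set p : ℝ := (∑ u, ∑ v, (if G.Adj u v then 1 else 0 : ℝ)) / ((n : ℝ) * ((n : ℝ) - 1)) with hpdef
  have hpG : ∑ u, ∑ v, (if G.Adj u v then 1 else 0 : ℝ) = p * ((n : ℝ) * ((n : ℝ) - 1)) := by
    rw [hpdef, div_mul_cancel₀ _ hn'.ne']
  have hqG : ∑ u, ∑ v, (if u = v then 0 else if G.Adj u v then 0 else 1 : ℝ) =
      (1 - p) * ((n : ℝ) * ((n : ℝ) - 1)) := by
    have e : ∀ u v : Fin n, (if u = v then 0 else if G.Adj u v then 0 else 1 : ℝ) =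
        (if u = v then 0 else 1) - (if G.Adj u v then 1 else 0) := by
      intro u v
      by_cases h : u = v
      · subst h; simp
      · by_cases h2 : G.Adj u v <;> simp [h, h2]
    simp only [e, Finset.sum_sub_distrib, sum_offdiag, hpG]
    ring
  have hpos : ∀ f : Fin n → Fin n → ℝ, (∀ u v, 0 ≤ f u v) → ∀ r, ∑ u, ∑ v, f u v =
      r * ((n : ℝ) * ((n : ℝ) - 1)) → 0 ≤ r ∧ ∀ u v, 0 < f u v → 0 < r := by
    intro f hf r hr
    have h0 : 0 ≤ ∑ u, ∑ v, f u v := Finset.sum_nonneg fun u _ => Finset.sum_nonneg fun v _ => hf u v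
    refine ⟨by rw [hr] at h0; exact nonneg_of_mul_nonneg_left h0 hn', fun u v h => ?_⟩
    have h1 : f u v ≤ ∑ u, ∑ v, f u v :=
      (Finset.single_le_sum (fun v _ => hf u v) (Finset.mem_univ v)).trans
        (Finset.single_le_sum (f := fun u => ∑ v, f u v)
          (fun u _ => Finset.sum_nonneg fun v _ => hf u v) (Finset.mem_univ u))
    rw [hr] at h1
    exact pos_of_mul_pos_left (h.trans_le h1) hn'.le
  obtain ⟨p0, p0'⟩ := hpos _ (fun u v => by split_ifs <;> norm_num) p hpG
  obtain ⟨p1, p1'⟩ := hpos _ (fun u v => by split_ifs <;> norm_num) (1 - p) hqG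
  have padj : ∀ u v, G.Adj u v → 0 < p := fun u v h => p0' u v (by simp [h])
  have pnadj : ∀ u v, u ≠ v → ¬ G.Adj u v → 0 < 1 - p := fun u v h h2 => p1' u v (by simp [h, h2])
  have hp : p ∈ Set.Icc (0:ℝ) 1 := ⟨p0, by linarith⟩
  have hb : ∀ u v, u ≠ v → 0 < if G.Adj u v then p else 1 - p := by
    intro u v huv
    split_ifs with h
    · exact padj u v h
    · exact pnadj u v huv h
  have hw : 0 < wt p n G := by
    refine mul_pos ?_ ?_
    · rcases Finset.eq_empty_or_nonempty G.edgeFinset with h | ⟨e, he⟩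
      · simp [h]
      · induction e with
        | h a b =>
          exact pow_pos (padj a b (by simpa using he)) _
    · rcases Finset.eq_empty_or_nonempty (EE n \ G.edgeFinset) with h | ⟨e, he⟩
      · have := Finset.card_sdiff_add_card_eq_card (edge_subset G)
        rw [h, card_EE, Finset.card_empty, zero_add] at this
        rw [this]; simp
      · induction e with
        | h a b =>
          rw [Finset.mem_sdiff, mem_EE] at he
          exact pow_pos (pnadj a b he.1 (by simpa using he.2)) _
  refine ⟨p, hp, ?_⟩
  have hlim : Filter.Tendsto (fun K : ℕ => (⨆ N, ff P N p) + 1 / (wt p n G * √(K:ℝ)))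
      Filter.atTop (nhds ((⨆ N, ff P N p) + 0)) := by
    refine Filter.Tendsto.const_add _ ?_
    refine Filter.Tendsto.div_atTop tendsto_const_nhds ?_
    exact (Real.tendsto_sqrt_atTop.comp tendsto_natCast_atTop_atTop).const_mul_atTop hw
  rw [add_zero] at hlim
  refine ge_of_tendsto hlim ?_
  filter_upwards [Filter.eventually_gt_atTop 0] with K hK
  have h1 := planted hP hne hn G hp hpG hb hw hK
  have h2 := le_ciSup (hbdd p hp) (n * K)
  linarith

theorem main {P : ∀ n : ℕ, Set (SimpleGraph (Fin n))} (hP : IsHereditary P)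
    (hne : ∀ n, (P n).Nonempty) :
    ∃ p : ℝ, p ∈ Set.Icc (0:ℝ) 1 ∧
      ∃ ε : ℕ → ℝ, Filter.Tendsto ε Filter.atTop (nhds 0) ∧
        ∀ (n : ℕ) (G : SimpleGraph (Fin n)), d1toProperty P G ≤ ff P n p + ε n := by
  have hbdd : ∀ p ∈ Set.Icc (0:ℝ) 1, BddAbove (Set.range fun N => ff P N p) := by
    rintro p hp
    refine ⟨1, ?_⟩
    rintro _ ⟨N, rfl⟩
    exact ff_le_one hne N hp
  have hcont : ContinuousOn (fun p => ⨆ N, ff P N p) (Set.Icc (0:ℝ) 1) := by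
    refine (LipschitzOnWith.of_le_add (fun p hp q hq => ?_)).continuousOn
    refine ciSup_le fun N => ?_
    have h1 := (abs_le.1 (ff_lip hne N p q hp hq)).2
    have h2 := le_ciSup (hbdd q hq) N
    rw [Real.dist_eq]
    linarith
  obtain ⟨p, hp, hmax⟩ := isCompact_Icc.exists_isMaxOn ⟨0, le_rfl, zero_le_one⟩ hcont
  refine ⟨p, hp, fun n => (⨆ N, ff P N p) - ff P n p, ?_, ?_⟩
  · have h := tendsto_atTop_ciSup (f := fun N => ff P N p)
      (fun a b hab => ff_mono hP hne hp hab) (hbdd p hp)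
    have h2 := h.const_sub (⨆ N, ff P N p)
    rwa [sub_self] at h2
  · intro n G
    obtain ⟨q, hq, h⟩ := upper hP hne G
    have := hmax hq
    simp only [Set.mem_ofPred_eq] at this
    linarith

end AS

/-- Alon–Stav theorem: for every hereditary graph property `P` there is a `p ∈ [0,1]` such
that the Erdős–Rényi random graph `G(n,p)` is asymptotically the graph on `n` nodes farthest
from `P` in edit distance. The expectation `E[d_1(G(n,p),P)]` is written out as a sum over
all graphs `H` on `n` vertices weighted by `p^{e(H)}(1−p)^{C(n,2)−e(H)}`. -/
theorem alon_stav (P : ∀ n : ℕ, Set (SimpleGraph (Fin n))) (hP : IsHereditary P)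
    (hne : ∀ n : ℕ, (P n).Nonempty) :
    ∃ p : ℝ, p ∈ Set.Icc (0:ℝ) 1 ∧
      ∃ ε : ℕ → ℝ, Filter.Tendsto ε Filter.atTop (nhds 0) ∧
        ∀ (n : ℕ) (G : SimpleGraph (Fin n)),
          d1toProperty P G ≤
            (∑ H : SimpleGraph (Fin n),
              p ^ H.edgeFinset.card * (1 - p) ^ (Nat.choose n 2 - H.edgeFinset.card) *
                d1toProperty P H) + ε n := by
  exact AS.main hP hne
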